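/- There exists an absolute constant C > 0 such that the following holds. Let m ≥ 2, Q ≥ 2, n ≥ 1, t ≥ 1 be integers and let 1 ≤ j ≤ m. Suppose B ⊆ (0, 1/m) ∩ Q_{≤Q} satisfies |B ∩ Q_{=q}| ≤ n for every 1 ≤ q ≤ Q. For each integer i ≥ 0 and rational x, let r_i(x) denote the number of tuples (b_1, ..., b_i) ∈ B^i with b_1 + ... + b_i = x (so r_0(x) = 1 if x = 0 and 0 otherwise). Then, summing over all rationals written in lowest terms as c/q, we have Σ' τ₃(q)^{2t} · r_j(c/q)² ≤ C · (m·log Q)³ · Q·n · M_log(τ₃^{2t+2}; Q) · Σ' τ₃(q)^{2t+2} · r_{j−1}(c/q)². -/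

import Mathlib

/-- The set of reduced rationals `a/q ∈ [0,1]` with `1 ≤ a ≤ q` and `gcd(a,q) = 1`. -/
def Qeq (q : ℕ) : Finset ℚ :=
  ((Finset.Icc 1 q).filter fun a => Nat.gcd a q = 1).image fun a : ℕ => (a : ℚ) / (q : ℚ)

/-- The set of rationals in `[0,1]` with denominator at most `Q`. -/
def Qle (Q : ℕ) : Finset ℚ := (Finset.Icc 1 Q).biUnion Qeq

/-- The ternary divisor function `τ₃(n) = #{(a,b,c) ∈ ℕ³ : abc = n}`. -/
def tau3 (n : ℕ) : ℕ :=
  ((Finset.Icc 1 n ×ˢ Finset.Icc 1 n ×ˢ Finset.Icc 1 n).filter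
    fun p => p.1 * p.2.1 * p.2.2 = n).card

/-- The logarithmic maximal average `M_log(ω; X) = max_{2 ≤ x ≤ X} (1/log x) ∑_{n ≤ x} ω(n)/n`. -/
noncomputable def MlogAvg (w : ℕ → ℝ) (X : ℕ) : ℝ :=
  ⨆ x ∈ Finset.Icc 2 X, (∑ n ∈ Finset.Icc 1 x, w n / (n : ℝ)) / Real.log x

/-- `rB B i x` is the number of `i`-tuples `(b₁, …, bᵢ) ∈ B^i` with `b₁ + ⋯ + bᵢ = x`. -/
def rB (B : Finset ℚ) (i : ℕ) (x : ℚ) : ℕ :=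
  ((Fintype.piFinset fun _ : Fin i => B).filter fun f => (∑ j, f j) = x).card

/-- The ordered factorisations of `n` into three positive factors. -/
def tripleFactorizations (n : ℕ) : Finset (ℕ × ℕ × ℕ) :=
  (Finset.Icc 1 n ×ˢ Finset.Icc 1 n ×ˢ Finset.Icc 1 n).filter fun p => p.1 * p.2.1 * p.2.2 = n

theorem tau3_eq_card (n : ℕ) : tau3 n = (tripleFactorizations n).card := rfl

theorem mem_tripleFactorizations {n : ℕ} (hn : 0 < n) (p : ℕ × ℕ × ℕ) :
    p ∈ tripleFactorizations n ↔ p.1 * p.2.1 * p.2.2 = n := by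
  simp only [tripleFactorizations, Finset.mem_filter, Finset.mem_product, Finset.mem_Icc,
    and_iff_right_iff_imp]
  rintro rfl
  obtain ⟨a, b, c⟩ := p
  simp only at hn ⊢
  have hc : 0 < c := Nat.pos_of_mul_pos_left hn
  have hab : 0 < a * b := Nat.pos_of_mul_pos_right hn
  have hb : 0 < b := Nat.pos_of_mul_pos_left hab
  have ha : 0 < a := Nat.pos_of_mul_pos_right hab
  refine ⟨⟨ha, Nat.le_of_dvd hn ⟨b * c, by ring⟩⟩, ⟨hb, Nat.le_of_dvd hn ⟨a * c, by ring⟩⟩,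
    hc, Nat.le_of_dvd hn ⟨a * b, by ring⟩⟩

theorem tau3_pos {n : ℕ} (hn : 0 < n) : 0 < tau3 n := by
  rw [tau3_eq_card, Finset.card_pos]
  exact ⟨(n, 1, 1), by simp [mem_tripleFactorizations hn]⟩

theorem tau3_mul_le {a b : ℕ} (ha : 0 < a) (hb : 0 < b) : tau3 (a * b) ≤ tau3 a * tau3 b := by
  simp only [tau3_eq_card]
  rw [← Finset.card_product]
  refine Finset.card_le_card_of_surjOn
    (fun p => (p.1.1 * p.2.1, p.1.2.1 * p.2.2.1, p.1.2.2 * p.2.2.2)) ?_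
  rintro ⟨x, y, z⟩ h
  rw [Finset.mem_coe, mem_tripleFactorizations (Nat.mul_pos ha hb)] at h
  simp only at h
  obtain ⟨u, z₁, hu, ⟨z₂, rfl⟩, rfl⟩ :=
    exists_dvd_and_dvd_of_dvd_mul (show a ∣ x * y * z from ⟨b, h⟩)
  obtain ⟨x₁, y₁, ⟨x₂, rfl⟩, ⟨y₂, rfl⟩, rfl⟩ := exists_dvd_and_dvd_of_dvd_mul hu
  refine ⟨((x₁, y₁, z₁), (x₂, y₂, z₂)), ?_, rfl⟩
  rw [Finset.mem_coe, Finset.mem_product, mem_tripleFactorizations ha,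
    mem_tripleFactorizations hb]
  refine ⟨rfl, Nat.eq_of_mul_eq_mul_left ha ?_⟩
  simp only
  rw [← h]
  ring

theorem tau3_le_of_dvd {a b : ℕ} (hb : 0 < b) (h : a ∣ b) : tau3 a ≤ tau3 b := by
  obtain ⟨c, rfl⟩ := h
  have ha : 0 < a := Nat.pos_of_mul_pos_right hb
  have hc : 0 < c := Nat.pos_of_mul_pos_left hb
  simp only [tau3_eq_card]
  refine Finset.card_le_card_of_injOn (fun p => (c * p.1, p.2)) ?_ ?_
  · intro p hp
    rw [Finset.mem_coe, mem_tripleFactorizations ha] at hp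
    rw [Finset.mem_coe, mem_tripleFactorizations hb, ← hp]
    simp only
    ring
  · rintro ⟨x, y⟩ - ⟨x', y'⟩ - h
    simp only [Prod.mk.injEq] at h
    exact Prod.ext (Nat.eq_of_mul_eq_mul_left hc h.1) h.2

/-- The datum `((α, β, g), γ)` describes three denominators in which each is the product of `g`
with two of the pairwise coprime numbers `α`, `β`, `γ`. -/
def IsDenPattern (π : (ℕ × ℕ × ℕ) × ℕ) (q q' d : ℕ) : Prop :=
  q = π.1.1 * π.1.2.1 * π.1.2.2 ∧ q' = π.1.2.1 * π.2 * π.1.2.2 ∧ d = π.1.1 * π.2 * π.1.2.2 ∧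
    π.1.1.Coprime π.1.2.1 ∧ π.1.1.Coprime π.2 ∧ π.1.2.1.Coprime π.2

theorem coprime_of_lcm_mul_eq {q r a c : ℕ} (h : 0 < q.lcm r) (hq : q.lcm r = q * c)
    (hr : q.lcm r = r * a) : a.Coprime c := by
  have hd : q.lcm r * a.gcd c ∣ q.lcm r * 1 := by
    rw [mul_one]
    obtain ⟨u, hu⟩ := Nat.gcd_dvd_left a c
    obtain ⟨v, hv⟩ := Nat.gcd_dvd_right a c
    have hg : 0 < a.gcd c := Nat.pos_of_ne_zero fun h0 => by
      rw [Nat.gcd_eq_zero_iff] at h0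
      rw [h0.2, mul_zero] at hq
      omega
    obtain ⟨l, hl⟩ : a.gcd c ∣ q.lcm r := hr ▸ (Nat.gcd_dvd_left a c).mul_left r
    have key : q.lcm r ∣ l := by
      apply Nat.lcm_dvd
      · refine ⟨v, Nat.eq_of_mul_eq_mul_left hg ?_⟩
        rw [← hl, hq]
        conv_lhs => rw [hv]
        ring
      · refine ⟨u, Nat.eq_of_mul_eq_mul_left hg ?_⟩
        rw [← hl, hr]
        conv_lhs => rw [hu]
        ring
    obtain ⟨w, hw⟩ := key
    refine ⟨w, ?_⟩
    conv_lhs => rw [hl, hw]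
    ring
  exact Nat.dvd_one.mp (Nat.dvd_of_mul_dvd_mul_left h hd)

theorem exists_isDenPattern {q q' d : ℕ} (hq : 0 < q) (hq' : 0 < q')
    (h₁ : q ∣ q'.lcm d) (h₂ : q' ∣ q.lcm d) (h₃ : d ∣ q.lcm q') :
    ∃ π, IsDenPattern π q q' d := by
  have hL : 0 < q.lcm q' := Nat.lcm_pos hq hq'
  have e₁ : q.lcm d = q.lcm q' :=
    Nat.dvd_antisymm (Nat.lcm_dvd (Nat.dvd_lcm_left _ _) h₃)
      (Nat.lcm_dvd (Nat.dvd_lcm_left _ _) h₂)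
  have e₂ : q'.lcm d = q.lcm q' :=
    Nat.dvd_antisymm (Nat.lcm_dvd (Nat.dvd_lcm_right _ _) h₃)
      (Nat.lcm_dvd h₁ (Nat.dvd_lcm_left _ _))
  obtain ⟨c, hc⟩ := Nat.dvd_lcm_left q q'
  obtain ⟨a, ha⟩ := Nat.dvd_lcm_right q q'
  obtain ⟨b, hb⟩ := h₃
  have hac : a.Coprime c := coprime_of_lcm_mul_eq hL hc ha
  have hbc : b.Coprime c := coprime_of_lcm_mul_eq (e₁ ▸ hL) (e₁.trans hc) (e₁.trans hb)
  have hba : b.Coprime a := coprime_of_lcm_mul_eq (e₂ ▸ hL) (e₂.trans ha) (e₂.trans hb)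
  have hab : a * b ∣ q.lcm q' := hba.symm.mul_dvd_of_dvd_of_dvd ⟨q', by rw [ha]; ring⟩
    ⟨d, by rw [hb]; ring⟩
  obtain ⟨g, hg⟩ := (Nat.Coprime.mul_left hac hbc).mul_dvd_of_dvd_of_dvd hab ⟨q, by rw [hc]; ring⟩
  have ha0 : 0 < a := Nat.pos_of_mul_pos_left (ha ▸ hL)
  have hb0 : 0 < b := Nat.pos_of_mul_pos_left (hb ▸ hL)
  have hc0 : 0 < c := Nat.pos_of_mul_pos_left (hc ▸ hL)
  refine ⟨((a, b, g), c), ?_, ?_, ?_, hba.symm, hac, hbc⟩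
  · exact Nat.eq_of_mul_eq_mul_right hc0 (by rw [← hc, hg]; ring)
  · exact Nat.eq_of_mul_eq_mul_right ha0 (by rw [← ha, hg]; ring)
  · exact Nat.eq_of_mul_eq_mul_right hb0 (by rw [← hb, hg]; ring)

theorem den_dvd_iff_exists_mul_eq_intCast {x : ℚ} {g : ℕ} :
    x.den ∣ g ↔ ∃ k : ℤ, x * g = k := by
  constructor
  · rintro ⟨c, rfl⟩
    refine ⟨x.num * c, ?_⟩
    push_cast
    rw [← mul_assoc, Rat.mul_den_eq_num]
  · rintro ⟨k, hk⟩
    have h : x.num * g = k * x.den := by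
      have : (x.num : ℚ) * g = k * x.den := by
        rw [← hk, ← Rat.mul_den_eq_num]
        ring
      exact_mod_cast this
    have : (x.den : ℤ) ∣ x.num * g := ⟨k, by rw [h]; ring⟩
    have h2 := Int.natAbs_dvd_natAbs.mpr this
    rw [Int.natAbs_mul, Int.natAbs_natCast, Int.natAbs_natCast] at h2
    exact x.reduced.symm.dvd_of_dvd_mul_left h2

theorem den_sub_dvd {x y : ℚ} {g : ℕ} (hx : x.den ∣ g) (hy : y.den ∣ g) : (x - y).den ∣ g := by
  rw [den_dvd_iff_exists_mul_eq_intCast] at *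
  obtain ⟨k, hk⟩ := hx
  obtain ⟨l, hl⟩ := hy
  exact ⟨k - l, by push_cast; rw [sub_mul, hk, hl]⟩

theorem exists_isDenPattern_sub (x b : ℚ) : ∃ π, IsDenPattern π x.den (x - b).den b.den := by
  refine exists_isDenPattern x.pos (x - b).pos ?_ ?_ ?_
  · have h : (x - b - (-b)).den ∣ (x - b).den.lcm b.den :=
      den_sub_dvd (Nat.dvd_lcm_left _ _) (by rw [Rat.neg_den]; exact Nat.dvd_lcm_right _ _)
    simpa using h
  · exact den_sub_dvd (Nat.dvd_lcm_left _ _) (Nat.dvd_lcm_right _ _)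
  · have h : (x - (x - b)).den ∣ x.den.lcm (x - b).den :=
      den_sub_dvd (Nat.dvd_lcm_left _ _) (Nat.dvd_lcm_right _ _)
    simpa using h

/-- A set of rationals in `[0, 1)` whose differences lie in `(1/g)ℤ` has at most `g` elements. -/
theorem card_le_of_den_sub_dvd {S : Finset ℚ} {g : ℕ} (hg : 0 < g)
    (h01 : ∀ b ∈ S, 0 ≤ b ∧ b < 1) (hd : ∀ b ∈ S, ∀ b' ∈ S, (b - b').den ∣ g) :
    S.card ≤ g := by
  have hgQ : (0 : ℚ) < g := by exact_mod_cast hg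
  have hcard : (Finset.Ico (0 : ℤ) g).card = g := by simp
  rw [← hcard]
  refine Finset.card_le_card_of_injOn (fun b => ⌊b * g⌋) ?_ ?_
  · intro b hb
    obtain ⟨h0, h1⟩ := h01 b hb
    rw [Finset.mem_coe, Finset.mem_Ico]
    refine ⟨Int.floor_nonneg.mpr (by positivity), Int.floor_lt.mpr ?_⟩
    push_cast
    nlinarith
  · intro b hb b' hb' h
    obtain ⟨k, hk⟩ := den_dvd_iff_exists_mul_eq_intCast.mp (hd b hb b' hb')
    have hlt := Int.abs_sub_lt_one_of_floor_eq_floor h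
    rw [← sub_mul, hk, ← Int.cast_abs] at hlt
    have hk0 : k = 0 := Int.abs_lt_one_iff.mp (by exact_mod_cast hlt)
    rw [hk0, Int.cast_zero, mul_eq_zero] at hk
    rcases hk with hk | hk
    · linarith
    · linarith

theorem den_eq_of_mem_Qeq {q : ℕ} {b : ℚ} (hb : b ∈ Qeq q) : b.den = q := by
  simp only [Qeq, Finset.mem_image, Finset.mem_filter, Finset.mem_Icc] at hb
  obtain ⟨a, ⟨⟨h1, h2⟩, hg⟩, rfl⟩ := hb
  have := Rat.den_div_eq_of_coprime (a := a) (b := q) (by omega) (by simpa using hg)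
  exact Int.natCast_inj.mp (by simpa using this)

theorem mem_Qeq_den_of_mem_Qle {Q : ℕ} {b : ℚ} (hb : b ∈ Qle Q) :
    b ∈ Qeq b.den ∧ b.den ≤ Q := by
  simp only [Qle, Finset.mem_biUnion, Finset.mem_Icc] at hb
  obtain ⟨q, hq, hbq⟩ := hb
  rw [den_eq_of_mem_Qeq hbq]
  exact ⟨hbq, hq.2⟩

theorem rB_succ (B : Finset ℚ) (i : ℕ) (x : ℚ) : rB B (i + 1) x = ∑ b ∈ B, rB B i (x - b) := by
  simp only [rB]
  rw [← Finset.card_sigma]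
  refine Finset.card_nbij' (fun f => ⟨f 0, Fin.tail f⟩) (fun s => Fin.cons s.1 s.2) ?_ ?_ ?_ ?_
  · intro f hf
    simp only [Finset.coe_filter, Fintype.mem_piFinset, Set.mem_ofPred_eq, Fin.sum_univ_succ] at hf
    simp only [Finset.coe_sigma, Set.mem_sigma_iff, Finset.mem_coe, Finset.mem_filter,
      Fintype.mem_piFinset, Fin.tail]
    exact ⟨hf.1 0, fun k => hf.1 _, by linarith [hf.2]⟩
  · rintro ⟨b, f⟩ hf
    simp only [Finset.coe_sigma, Set.mem_sigma_iff, Finset.mem_coe, Finset.mem_filter,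
      Fintype.mem_piFinset] at hf
    simp only [Finset.coe_filter, Fintype.mem_piFinset, Set.mem_ofPred_eq, Fin.sum_univ_succ,
      Fin.cons_zero, Fin.cons_succ]
    refine ⟨fun k => ?_, by linarith [hf.2.2]⟩
    refine Fin.cases ?_ (fun k => ?_) k
    · simpa using hf.1
    · simpa using hf.2.1 k
  · intro f _
    simp
  · rintro ⟨b, f⟩ _
    simp

theorem rB_support_finite (B : Finset ℚ) (i : ℕ) : (Function.support (rB B i)).Finite := by
  refine ((Fintype.piFinset fun _ : Fin i => B).image fun f => ∑ j, f j).finite_toSet.subset ?_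
  intro x hx
  obtain ⟨f, hf⟩ := Finset.card_ne_zero.mp (Function.mem_support.mp hx)
  rw [Finset.mem_filter] at hf
  exact Finset.mem_coe.mpr (Finset.mem_image.mpr ⟨f, hf⟩)

theorem le_MlogAvg (w : ℕ → ℝ) {X : ℕ} (hX : 2 ≤ X) :
    (∑ n ∈ Finset.Icc 1 X, w n / (n : ℝ)) / Real.log X ≤ MlogAvg w X := by
  unfold MlogAvg
  set φ : ℕ → ℝ := fun x => (∑ n ∈ Finset.Icc 1 x, w n / (n : ℝ)) / Real.log x with hφ
  have hbdd : BddAbove (Set.range fun x => ⨆ _ : x ∈ Finset.Icc 2 X, φ x) := by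
    refine (((Finset.Icc 2 X).finite_toSet.image φ).insert 0).bddAbove.mono ?_
    rintro _ ⟨x, rfl⟩
    by_cases hx : x ∈ Finset.Icc 2 X
    · exact Or.inr ⟨x, hx, by simp only [ciSup_pos hx]⟩
    · exact Or.inl (by simp [hx])
  have hmem : X ∈ Finset.Icc 2 X := Finset.mem_Icc.mpr ⟨hX, le_rfl⟩
  calc φ X = ⨆ _ : X ∈ Finset.Icc 2 X, φ X := (ciSup_pos (f := fun _ => φ X) hmem).symm
    _ ≤ _ := le_ciSup hbdd X

instance (π : (ℕ × ℕ × ℕ) × ℕ) (q q' d : ℕ) : Decidable (IsDenPattern π q q' d) :=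
  inferInstanceAs (Decidable (_ ∧ _))

/-- The elements of `B` that realise the pattern `π` together with `x`. -/
def patternFiber (B : Finset ℚ) (π : (ℕ × ℕ × ℕ) × ℕ) (x : ℚ) : Finset ℚ :=
  B.filter fun b => IsDenPattern π x.den (x - b).den b.den

theorem den_sub_dvd_of_isDenPattern {π : (ℕ × ℕ × ℕ) × ℕ} {y b b₁ b₂ : ℚ}
    (h₁ : IsDenPattern π (y + b₁).den y.den b₁.den)
    (h₁' : IsDenPattern π (y + b₁).den (y + b₁ - b).den b.den)
    (h₂ : IsDenPattern π (y + b₂).den y.den b₂.den)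
    (h₂' : IsDenPattern π (y + b₂).den (y + b₂ - b).den b.den) :
    (b₁ - b₂).den ∣ π.1.2.2 := by
  obtain ⟨⟨α, β, g⟩, γ⟩ := π
  simp only [IsDenPattern] at *
  obtain ⟨-, hαγ, hβγ⟩ := h₁.2.2.2
  have e₁ : (b₁ - b₂).den ∣ α * β * g := by
    have := den_sub_dvd h₁.1.dvd h₂.1.dvd
    rwa [add_sub_add_left_eq_sub] at this
  have e₂ : (b₁ - b₂).den ∣ β * γ * g := by
    have := den_sub_dvd h₁'.2.1.dvd h₂'.2.1.dvd
    rwa [sub_sub_sub_cancel_right, add_sub_add_left_eq_sub] at this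
  have e₃ : (b₁ - b₂).den ∣ α * γ * g := den_sub_dvd h₁.2.2.1.dvd h₂.2.2.1.dvd
  have f : (b₁ - b₂).den ∣ γ * g := by
    have := Nat.dvd_gcd e₂ e₃
    rwa [mul_assoc, mul_assoc, Nat.gcd_mul_right, h₁.2.2.2.1.symm.gcd_eq_one, one_mul] at this
  have := Nat.dvd_gcd f e₁
  rwa [Nat.gcd_mul_right, (Nat.Coprime.mul_left hαγ hβγ).symm.gcd_eq_one, one_mul] at this

theorem sum_card_patternFiber_le {B : Finset ℚ} {n : ℕ} (h01 : ∀ b ∈ B, 0 ≤ b ∧ b < 1)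
    (hn : ∀ d, (B.filter fun b => b.den = d).card ≤ n) (π : (ℕ × ℕ × ℕ) × ℕ) (y : ℚ) :
    ∑ b ∈ B.filter (fun b => IsDenPattern π (y + b).den y.den b.den),
      (patternFiber B π (y + b)).card ≤ n * π.1.2.2 := by
  simp only [patternFiber, Finset.card_filter]
  rw [Finset.sum_comm]
  calc _ ≤ ∑ b' ∈ B, if b'.den = π.1.1 * π.2 * π.1.2.2 then π.1.2.2 else 0 := by
        refine Finset.sum_le_sum fun b' _ => ?_
        rw [← Finset.card_filter]
        split_ifs with hb'
        · refine card_le_of_den_sub_dvd ?_ ?_ ?_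
          · refine Nat.pos_of_ne_zero fun h0 => ?_
            rw [h0, mul_zero] at hb'
            exact b'.den_nz hb'
          · intro b hb
            simp only [Finset.mem_filter] at hb
            exact h01 b hb.1.1
          · intro b₁ hb₁ b₂ hb₂
            simp only [Finset.mem_filter] at hb₁ hb₂
            exact den_sub_dvd_of_isDenPattern hb₁.1.2 hb₁.2 hb₂.1.2 hb₂.2
        · rw [Nat.le_zero, Finset.card_eq_zero, Finset.filter_eq_empty_iff]
          exact fun b _ h => hb' h.2.2.1
    _ = (B.filter fun b => b.den = π.1.1 * π.2 * π.1.2.2).card * π.1.2.2 := by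
        rw [← Finset.sum_filter, Finset.sum_const, smul_eq_mul]
    _ ≤ n * π.1.2.2 := Nat.mul_le_mul_right _ (hn _)

/-- Cauchy–Schwarz over the patterns available at a fixed point `x`. -/
theorem sq_sum_le_sum_patterns {B : Finset ℚ} {Q : ℕ} (hB : ∀ b ∈ B, b.den ≤ Q) {f : ℚ → ℝ}
    (hf : ∀ y, 0 ≤ f y) (x : ℚ) :
    (∑ b ∈ B, f (x - b)) ^ 2 ≤ (tau3 x.den * ∑ c ∈ Finset.Icc 1 Q, (1 : ℝ) / c) *
      ∑ π ∈ tripleFactorizations x.den ×ˢ Finset.Icc 1 Q, (π.2 : ℝ) *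
        ((patternFiber B π x).card * ∑ b ∈ patternFiber B π x, f (x - b) ^ 2) := by
  set E := tripleFactorizations x.den ×ˢ Finset.Icc 1 Q with hE
  have hcover : ∑ b ∈ B, f (x - b) ≤ ∑ π ∈ E, ∑ b ∈ patternFiber B π x, f (x - b) := by
    simp only [patternFiber, Finset.sum_filter]
    rw [Finset.sum_comm]
    refine Finset.sum_le_sum fun b hb => ?_
    obtain ⟨π, hπ⟩ := exists_isDenPattern_sub x b
    have hmem : π ∈ E := by
      rw [hE, Finset.mem_product, mem_tripleFactorizations x.pos, Finset.mem_Icc]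
      have hd := hπ.2.2.1
      have h0 : 0 < π.1.1 * π.2 * π.1.2.2 := hd ▸ b.pos
      have h2 : 0 < π.2 := Nat.pos_of_mul_pos_left (Nat.pos_of_mul_pos_right h0)
      refine ⟨hπ.1.symm, h2, le_trans (Nat.le_of_dvd b.pos ?_) (hB b hb)⟩
      exact hd ▸ ⟨π.1.1 * π.1.2.2, by ring⟩
    refine le_trans ?_ (Finset.single_le_sum (fun π _ => ?_) hmem)
    · rw [if_pos hπ]
    · split_ifs
      exacts [hf _, le_rfl]
  have hsum : ∑ π ∈ E, (1 : ℝ) / π.2 = tau3 x.den * ∑ c ∈ Finset.Icc 1 Q, (1 : ℝ) / c := by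
    rw [hE, Finset.sum_product]
    simp only [Finset.sum_const, nsmul_eq_mul]
    rfl
  calc (∑ b ∈ B, f (x - b)) ^ 2
      ≤ (∑ π ∈ E, ∑ b ∈ patternFiber B π x, f (x - b)) ^ 2 :=
        pow_le_pow_left₀ (Finset.sum_nonneg fun b _ => hf _) hcover 2
    _ ≤ (∑ π ∈ E, (1 : ℝ) / π.2) *
          ∑ π ∈ E, (π.2 : ℝ) * (∑ b ∈ patternFiber B π x, f (x - b)) ^ 2 := by
        refine Finset.sum_sq_le_sum_mul_sum_of_sq_le_mul _ (fun π _ => by positivity)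
          (fun π _ => by positivity) fun π hπ => le_of_eq ?_
        have : (π.2 : ℝ) ≠ 0 := by
          have := (Finset.mem_Icc.mp (Finset.mem_product.mp hπ).2).1
          positivity
        field_simp
    _ ≤ _ := by
        rw [hsum]
        gcongr
        exact sq_sum_le_card_mul_sum_sq

theorem weighted_sum_card_patternFiber_le {B : Finset ℚ} {n Q : ℕ}
    (h01 : ∀ b ∈ B, 0 ≤ b ∧ b < 1) (hB : ∀ b ∈ B, b.den ≤ Q)
    (hn : ∀ d, (B.filter fun b => b.den = d).card ≤ n) (s : ℕ) (π : (ℕ × ℕ × ℕ) × ℕ) (y : ℚ) :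
    ∑ b ∈ B.filter (fun b => IsDenPattern π (y + b).den y.den b.den),
      (tau3 (y + b).den : ℝ) ^ s * (π.2 * (patternFiber B π (y + b)).card) ≤
    if ((π.1.2.1, π.2, π.1.2.2), π.1.1) ∈ tripleFactorizations y.den ×ˢ Finset.Icc 1 Q then
      Q * n * (tau3 y.den : ℝ) ^ s * ((tau3 π.1.1 : ℝ) ^ s / π.1.1) else 0 := by
  rcases (B.filter (fun b => IsDenPattern π (y + b).den y.den b.den)).eq_empty_or_nonempty with
    h | ⟨b₀, hb₀⟩
  · rw [h, Finset.sum_empty]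
    split_ifs <;> positivity
  rw [Finset.mem_filter] at hb₀
  obtain ⟨hb₀, hq, hq', hd, -⟩ := hb₀
  have hcard := sum_card_patternFiber_le h01 hn π y
  have hterm : ∀ b ∈ B.filter (fun b => IsDenPattern π (y + b).den y.den b.den),
      (tau3 (y + b).den : ℝ) ^ s * (π.2 * (patternFiber B π (y + b)).card) =
        (tau3 (π.1.1 * π.1.2.1 * π.1.2.2) : ℝ) ^ s * π.2 * (patternFiber B π (y + b)).card := by
    intro b hb
    rw [(Finset.mem_filter.mp hb).2.1]
    ring
  rw [Finset.sum_congr rfl hterm, ← Finset.mul_sum, ← Nat.cast_sum]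
  obtain ⟨⟨α, β, g⟩, γ⟩ := π
  simp only at hq hq' hd hcard ⊢
  have hα : 0 < α := Nat.pos_of_mul_pos_right (Nat.pos_of_mul_pos_right (hd ▸ b₀.pos))
  have hdQ : α * γ * g ≤ Q := hd ▸ hB b₀ hb₀
  have hβg : 0 < β * g := by
    have : 0 < α * (β * g) := by rw [← mul_assoc, ← hq]; exact Rat.pos _
    exact Nat.pos_of_mul_pos_left this
  have hαQ : α ≤ Q := hd ▸ hB b₀ hb₀ |>.trans' (Nat.le_of_dvd (hd ▸ b₀.pos) ⟨γ * g, by ring⟩)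
  rw [if_pos (by
    rw [Finset.mem_product, mem_tripleFactorizations y.pos, Finset.mem_Icc]
    exact ⟨hq'.symm, hα, hαQ⟩)]
  have hτ : tau3 (α * β * g) ≤ tau3 y.den * tau3 α := by
    rw [mul_assoc, mul_comm (tau3 y.den)]
    refine (tau3_mul_le hα hβg).trans (Nat.mul_le_mul_left _ (tau3_le_of_dvd y.pos ?_))
    exact hq' ▸ ⟨γ, by ring⟩
  have hαR : (0 : ℝ) < α := by exact_mod_cast hα
  calc _ ≤ ((tau3 y.den * tau3 α : ℕ) : ℝ) ^ s * γ * ((n * g : ℕ) : ℝ) :=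
        mul_le_mul (mul_le_mul_of_nonneg_right
          (pow_le_pow_left₀ (Nat.cast_nonneg _) (Nat.cast_le.mpr hτ) s) (Nat.cast_nonneg _))
          (Nat.cast_le.mpr hcard) (Nat.cast_nonneg _) (by positivity)
    _ = (tau3 y.den : ℝ) ^ s * n * ((tau3 α : ℝ) ^ s / α) * ((α * γ * g : ℕ) : ℝ) := by
        push_cast
        field_simp
        ring
    _ ≤ (tau3 y.den : ℝ) ^ s * n * ((tau3 α : ℝ) ^ s / α) * (Q : ℝ) :=
        mul_le_mul_of_nonneg_left (Nat.cast_le.mpr hdQ) (by positivity)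
    _ = _ := by ring

theorem sum_patterns_le {B : Finset ℚ} {n Q : ℕ} (h01 : ∀ b ∈ B, 0 ≤ b ∧ b < 1)
    (hB : ∀ b ∈ B, b.den ≤ Q) (hn : ∀ d, (B.filter fun b => b.den = d).card ≤ n) (s : ℕ) (y : ℚ)
    (E : Finset ((ℕ × ℕ × ℕ) × ℕ)) :
    ∑ π ∈ E, ∑ b ∈ B.filter (fun b => IsDenPattern π (y + b).den y.den b.den),
      (tau3 (y + b).den : ℝ) ^ s * (π.2 * (patternFiber B π (y + b)).card) ≤
    Q * n * (tau3 y.den : ℝ) ^ (s + 1) * ∑ a ∈ Finset.Icc 1 Q, (tau3 a : ℝ) ^ s / a := by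
  let φ : (ℕ × ℕ × ℕ) × ℕ → (ℕ × ℕ × ℕ) × ℕ := fun π => ((π.1.2.1, π.2, π.1.2.2), π.1.1)
  have hφ : Function.Injective φ := by
    rintro ⟨⟨a, b, g⟩, c⟩ ⟨⟨a', b', g'⟩, c'⟩ h
    simp only [φ, Prod.mk.injEq] at h ⊢
    tauto
  let T := tripleFactorizations y.den ×ˢ Finset.Icc 1 Q
  let w : (ℕ × ℕ × ℕ) × ℕ → ℝ := fun π =>
    Q * n * (tau3 y.den : ℝ) ^ s * ((tau3 π.2 : ℝ) ^ s / π.2)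
  calc _ ≤ ∑ π ∈ E, if φ π ∈ T then w (φ π) else 0 :=
        Finset.sum_le_sum fun π _ => weighted_sum_card_patternFiber_le h01 hB hn s π y
    _ = ∑ π ∈ (E.filter fun π => φ π ∈ T).image φ, w π := by
        rw [Finset.sum_image hφ.injOn, Finset.sum_filter]
    _ ≤ ∑ π ∈ T, w π := by
        refine Finset.sum_le_sum_of_subset_of_nonneg ?_ fun π _ _ => by positivity
        intro π hπ
        obtain ⟨π', hπ', rfl⟩ := Finset.mem_image.mp hπ
        exact (Finset.mem_filter.mp hπ').2
    _ = _ := by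
        rw [Finset.sum_product]
        simp only [w]
        rw [Finset.sum_const, ← Finset.mul_sum, ← tau3_eq_card, nsmul_eq_mul]
        ring

theorem sum_sub_le_sum_of_support {h : ℚ → ℝ} (hh : ∀ y, 0 ≤ h y) {Y : Finset ℚ}
    (hY : ∀ y ∉ Y, h y = 0) (X : Finset ℚ) (b : ℚ) :
    ∑ x ∈ X, h (x - b) ≤ ∑ y ∈ Y, h y := by
  rw [← Finset.sum_image (f := h) (g := fun x => x - b) (sub_left_injective.injOn)]
  calc _ ≤ ∑ y ∈ X.image (fun x => x - b) ∪ Y, h y :=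
        Finset.sum_le_sum_of_subset_of_nonneg Finset.subset_union_left fun y _ _ => hh y
    _ = _ := (Finset.sum_subset Finset.subset_union_right fun y _ hy => hY y hy).symm

theorem sum_tau3_mul_sq_convolution_le {B : Finset ℚ} {n Q : ℕ} (h01 : ∀ b ∈ B, 0 ≤ b ∧ b < 1)
    (hB : ∀ b ∈ B, b.den ≤ Q) (hn : ∀ d, (B.filter fun b => b.den = d).card ≤ n) (s : ℕ)
    {f : ℚ → ℝ} (hf : ∀ y, 0 ≤ f y) {Y : Finset ℚ} (hY : ∀ y ∉ Y, f y = 0) (X : Finset ℚ) :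
    ∑ x ∈ X, (tau3 x.den : ℝ) ^ s * (∑ b ∈ B, f (x - b)) ^ 2 ≤
      (∑ c ∈ Finset.Icc 1 Q, (1 : ℝ) / c) * (Q * n) *
        (∑ a ∈ Finset.Icc 1 Q, (tau3 a : ℝ) ^ (s + 1) / a) *
        ∑ y ∈ Y, (tau3 y.den : ℝ) ^ (s + 2) * f y ^ 2 := by
  set H := ∑ c ∈ Finset.Icc 1 Q, (1 : ℝ) / c with hH
  have hH0 : 0 ≤ H := Finset.sum_nonneg fun c _ => by positivity
  set A := ∑ a ∈ Finset.Icc 1 Q, (tau3 a : ℝ) ^ (s + 1) / a with hA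
  let E := X.biUnion fun x => tripleFactorizations x.den ×ˢ Finset.Icc 1 Q
  let W : (ℕ × ℕ × ℕ) × ℕ → ℚ → ℚ → ℝ := fun π b y =>
    if IsDenPattern π (y + b).den y.den b.den then
      (tau3 (y + b).den : ℝ) ^ (s + 1) * (π.2 * (patternFiber B π (y + b)).card) * f y ^ 2 else 0
  have hW : ∀ π b y, 0 ≤ W π b y := fun π b y => by
    simp only [W]
    split_ifs <;> positivity
  have hrow : ∀ x ∈ X, (tau3 x.den : ℝ) ^ s * (∑ b ∈ B, f (x - b)) ^ 2 ≤
      H * ∑ π ∈ E, ∑ b ∈ B, W π b (x - b) := by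
    intro x hx
    calc _ ≤ (tau3 x.den : ℝ) ^ s * ((tau3 x.den * H) *
          ∑ π ∈ tripleFactorizations x.den ×ˢ Finset.Icc 1 Q, (π.2 : ℝ) *
            ((patternFiber B π x).card * ∑ b ∈ patternFiber B π x, f (x - b) ^ 2)) := by
          gcongr
          exact sq_sum_le_sum_patterns hB hf x
      _ = H * ∑ π ∈ tripleFactorizations x.den ×ˢ Finset.Icc 1 Q, ∑ b ∈ B, W π b (x - b) := by
          rw [mul_comm (tau3 x.den : ℝ) H, mul_assoc H, mul_left_comm _ H]
          congr 1
          rw [← mul_assoc, ← pow_succ, Finset.mul_sum]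
          refine Finset.sum_congr rfl fun π _ => ?_
          simp only [W, sub_add_cancel]
          rw [← Finset.sum_filter, ← Finset.mul_sum, patternFiber]
          ring
      _ ≤ _ := by
          refine mul_le_mul_of_nonneg_left (Finset.sum_le_sum_of_subset_of_nonneg ?_ ?_) hH0
          · exact Finset.subset_biUnion_of_mem
              (fun x : ℚ => tripleFactorizations x.den ×ˢ Finset.Icc 1 Q) hx
          · exact fun π _ _ => Finset.sum_nonneg fun b _ => hW _ _ _
  have hcol : ∀ y, ∑ π ∈ E, ∑ b ∈ B, W π b y ≤
      (Q * n * (tau3 y.den : ℝ) ^ (s + 2) * A) * f y ^ 2 := by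
    intro y
    refine le_trans (le_of_eq ?_)
      (mul_le_mul_of_nonneg_right (sum_patterns_le h01 hB hn (s + 1) y E) (sq_nonneg (f y)))
    rw [Finset.sum_mul]
    refine Finset.sum_congr rfl fun π _ => ?_
    rw [Finset.sum_mul, Finset.sum_filter]
  calc _ ≤ ∑ x ∈ X, H * ∑ π ∈ E, ∑ b ∈ B, W π b (x - b) := Finset.sum_le_sum hrow
    _ = H * ∑ π ∈ E, ∑ b ∈ B, ∑ x ∈ X, W π b (x - b) := by
        rw [← Finset.mul_sum, Finset.sum_comm]
        congr 1
        exact Finset.sum_congr rfl fun π _ => Finset.sum_comm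
    _ ≤ H * ∑ π ∈ E, ∑ b ∈ B, ∑ y ∈ Y, W π b y := by
        refine mul_le_mul_of_nonneg_left (Finset.sum_le_sum fun π _ =>
          Finset.sum_le_sum fun b _ => ?_) hH0
        exact sum_sub_le_sum_of_support (hW π b) (fun y hy => by simp [W, hY y hy]) X b
    _ = H * ∑ y ∈ Y, ∑ π ∈ E, ∑ b ∈ B, W π b y := by
        rw [Finset.sum_comm (s := Y)]
        congr 1
        exact Finset.sum_congr rfl fun π _ => Finset.sum_comm
    _ ≤ H * ∑ y ∈ Y, (Q * n * (tau3 y.den : ℝ) ^ (s + 2) * A) * f y ^ 2 :=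
        mul_le_mul_of_nonneg_left (Finset.sum_le_sum fun y _ => hcol y) hH0
    _ = _ := by
        rw [Finset.mul_sum, Finset.mul_sum]
        exact Finset.sum_congr rfl fun y _ => by ring

theorem sum_one_div_le_three_mul_log {Q : ℕ} (hQ : 2 ≤ Q) :
    ∑ c ∈ Finset.Icc 1 Q, (1 : ℝ) / c ≤ 3 * Real.log Q := by
  have h := harmonic_le_one_add_log Q
  rw [harmonic_eq_sum_Icc] at h
  push_cast at h
  have h2 : Real.log 2 ≤ Real.log Q :=
    Real.log_le_log two_pos (by exact_mod_cast hQ)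
  simp only [one_div]
  linarith [Real.log_two_gt_d9]

theorem sum_tau3_pow_div_le {Q : ℕ} (hQ : 2 ≤ Q) (s : ℕ) :
    ∑ a ∈ Finset.Icc 1 Q, (tau3 a : ℝ) ^ s / a ≤
      Real.log Q * MlogAvg (fun k => (tau3 k : ℝ) ^ (s + 1)) Q := by
  have hlog : 0 < Real.log Q := Real.log_pos (by exact_mod_cast hQ)
  have h := le_MlogAvg (fun k => (tau3 k : ℝ) ^ (s + 1)) hQ
  rw [div_le_iff₀ hlog, mul_comm] at h
  refine le_trans (Finset.sum_le_sum fun a ha => ?_) h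
  have hτ : (1 : ℝ) ≤ tau3 a := by exact_mod_cast tau3_pos (Finset.mem_Icc.mp ha).1
  exact div_le_div_of_nonneg_right (pow_le_pow_right₀ hτ s.le_succ) (Nat.cast_nonneg a)

theorem statement_5 :
    ∃ C > (0 : ℝ), ∀ m Q n t j : ℕ, 2 ≤ m → 2 ≤ Q → 1 ≤ n → 1 ≤ t → 1 ≤ j → j ≤ m →
      ∀ B : Finset ℚ, B ⊆ Qle Q → (∀ b ∈ B, 0 < b ∧ b < 1 / (m : ℚ)) →
        (∀ q : ℕ, 1 ≤ q → q ≤ Q → (B ∩ Qeq q).card ≤ n) →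
        (∑ᶠ x : ℚ, (tau3 x.den : ℝ) ^ (2 * t) * (rB B j x : ℝ) ^ 2) ≤
          C * ((m : ℝ) * Real.log Q) ^ 3 * ((Q : ℝ) * n) *
            MlogAvg (fun k => (tau3 k : ℝ) ^ (2 * t + 2)) Q *
            ∑ᶠ x : ℚ, (tau3 x.den : ℝ) ^ (2 * t + 2) * (rB B (j - 1) x : ℝ) ^ 2 := by
  refine ⟨1, one_pos, ?_⟩
  intro m Q n t j hm hQ _ _ hj _ B hBQ hBm hBn
  obtain ⟨i, rfl⟩ : ∃ i, j = i + 1 := ⟨j - 1, by omega⟩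
  rw [Nat.add_sub_cancel]
  have h01 : ∀ b ∈ B, 0 ≤ b ∧ b < 1 := fun b hb => by
    refine ⟨(hBm b hb).1.le, (hBm b hb).2.trans_le ?_⟩
    rw [div_le_one (by positivity)]
    exact_mod_cast (by omega : 1 ≤ m)
  have hden : ∀ b ∈ B, b.den ≤ Q := fun b hb => (mem_Qeq_den_of_mem_Qle (hBQ hb)).2
  have hn : ∀ d, (B.filter fun b => b.den = d).card ≤ n := by
    intro d
    rcases (B.filter fun b => b.den = d).eq_empty_or_nonempty with h | ⟨b₀, hb₀⟩
    · simp [h]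
    · rw [Finset.mem_filter] at hb₀
      refine le_trans (Finset.card_le_card fun b hb => ?_)
        (hBn d (hb₀.2 ▸ b₀.pos) (hb₀.2 ▸ hden b₀ hb₀.1))
      rw [Finset.mem_filter] at hb
      exact Finset.mem_inter.mpr ⟨hb.1, hb.2 ▸ (mem_Qeq_den_of_mem_Qle (hBQ hb.1)).1⟩
  have hfin : ∀ k s, ∑ᶠ x : ℚ, (tau3 x.den : ℝ) ^ s * (rB B k x : ℝ) ^ 2 =
      ∑ x ∈ (rB_support_finite B k).toFinset, (tau3 x.den : ℝ) ^ s * (rB B k x : ℝ) ^ 2 := by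
    intro k s
    refine finsum_eq_sum_of_support_subset _ fun x hx => ?_
    rw [Set.Finite.coe_toFinset, Function.mem_support]
    rintro h0
    exact hx (by simp [h0])
  rw [hfin, hfin]
  set Y := (rB_support_finite B i).toFinset with hYdef
  have hY : ∀ y ∉ Y, (rB B i y : ℝ) = 0 := fun y hy => by
    rw [hYdef, Set.Finite.mem_toFinset, Function.mem_support, not_not] at hy
    exact_mod_cast hy
  have key := sum_tau3_mul_sq_convolution_le h01 hden hn (2 * t)
    (f := fun y => (rB B i y : ℝ)) (fun y => Nat.cast_nonneg _) hY
    (rB_support_finite B (i + 1)).toFinset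
  simp only [← Nat.cast_sum, ← rB_succ] at key
  refine key.trans ?_
  have hlog2 : Real.log 2 ≤ Real.log Q := Real.log_le_log two_pos (by exact_mod_cast hQ)
  have hlog : (0.69 : ℝ) ≤ Real.log Q := by linarith [Real.log_two_gt_d9]
  have hA := sum_tau3_pow_div_le hQ (2 * t + 1)
  have hA0 : 0 ≤ ∑ a ∈ Finset.Icc 1 Q, (tau3 a : ℝ) ^ (2 * t + 1) / a :=
    Finset.sum_nonneg fun a _ => by positivity
  have hM : 0 ≤ MlogAvg (fun k => (tau3 k : ℝ) ^ (2 * t + 2)) Q :=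
    nonneg_of_mul_nonneg_right (hA0.trans hA) (by linarith)
  have hmR : (2 : ℝ) ≤ m := by exact_mod_cast hm
  have hconst : 3 * Real.log Q * Real.log Q ≤ 1 * ((m : ℝ) * Real.log Q) ^ 3 := by
    have h8 : (2 : ℝ) ^ 3 ≤ (m : ℝ) ^ 3 := by gcongr
    have h3 : 3 ≤ (m : ℝ) ^ 3 * Real.log Q := by nlinarith
    nlinarith [mul_le_mul_of_nonneg_right h3 (sq_nonneg (Real.log Q))]
  have hS : 0 ≤ ∑ y ∈ Y, (tau3 y.den : ℝ) ^ (2 * t + 2) * (rB B i y : ℝ) ^ 2 :=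
    Finset.sum_nonneg fun y _ => by positivity
  refine mul_le_mul_of_nonneg_right ?_ hS
  calc _ ≤ 3 * Real.log Q * (Q * n) *
        (Real.log Q * MlogAvg (fun k => (tau3 k : ℝ) ^ (2 * t + 2)) Q) := by
        have := sum_one_div_le_three_mul_log hQ
        gcongr
    _ = 3 * Real.log Q * Real.log Q * (Q * n) *
        MlogAvg (fun k => (tau3 k : ℝ) ^ (2 * t + 2)) Q := by ring
    _ ≤ _ := by gcongr
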